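/- Let D be a cone metric on X, d the induced real-valued function, (x_n) a sequence in X and x ∈ X. If (x_n) converges to x in the cone metric sense, i.e. for every c ∈ E with 0 ≪ c there exists N ∈ ℕ such that D(x_n, x) ≪ c for all n ≥ N, then d(x_n, x) → 0 as n → ∞. -/

import Mathlib

/-!
The interior of a cone is stable under multiplication by positive scalars. Fix `c` in the interior
of `P`; then `t • c` is again interior for every `t > 0`, so eventually `D (s n) x ≪ t • c`. Hence
`t • c` is one of the upper bounds `u` in the infimum defining `d (s n) x`, which gives
`d (s n) x ≤ t * ‖c‖`, and this is as small as desired.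
-/

open Filter Topology

/-- A cone in a real Banach space `E`. -/
structure IsCone (E : Type*) [NormedAddCommGroup E] [NormedSpace ℝ E] (P : Set E) : Prop where
  closed : IsClosed P
  nonempty : P.Nonempty
  ne_singleton_zero : P ≠ {0}
  combo_mem : ∀ a b : ℝ, 0 ≤ a → 0 ≤ b → ∀ x y : E, x ∈ P → y ∈ P → a • x + b • y ∈ P
  eq_zero_of_mem_of_neg_mem : ∀ x : E, x ∈ P → -x ∈ P → x = 0

/-- `x ≤ y` with respect to the cone `P`, i.e. `y - x ∈ P`. -/
def coneLe {E : Type*} [NormedAddCommGroup E] (P : Set E) (x y : E) : Prop :=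
  y - x ∈ P

/-- `x ≪ y` with respect to the cone `P`, i.e. `y - x ∈ interior P`. -/
def coneLt {E : Type*} [NormedAddCommGroup E] (P : Set E) (x y : E) : Prop :=
  y - x ∈ interior P

/-- `D : X × X → E` is a cone metric with respect to the cone `P`. -/
structure IsConeMetric {E : Type*} [NormedAddCommGroup E] (P : Set E)
    {X : Type*} (D : X → X → E) : Prop where
  nonneg : ∀ x y : X, coneLe P 0 (D x y)
  eq_zero_iff : ∀ x y : X, (D x y = 0 ↔ x = y)
  symm : ∀ x y : X, D x y = D y x
  triangle : ∀ x y z : X, coneLe P (D x y) (D x z + D z y)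

/-- The induced real-valued function `d(x,y) = inf {‖u‖ : D x y ≤ u}`. -/
noncomputable def inducedDist {E : Type*} [NormedAddCommGroup E] (P : Set E)
    {X : Type*} (D : X → X → E) (x y : X) : ℝ :=
  sInf {r : ℝ | ∃ u : E, r = ‖u‖ ∧ coneLe P (D x y) u}

theorem IsCone.smul_mem_interior {E : Type*} [NormedAddCommGroup E] [NormedSpace ℝ E] {P : Set E}
    (hP : IsCone E P) {t : ℝ} (ht : 0 < t) {c : E} (hc : c ∈ interior P) :
    t • c ∈ interior P := by
  -- `t • interior P` is an open subset of `P`, as `y ↦ t⁻¹ • y` is continuous.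
  have hopen : IsOpen ((fun y : E => t⁻¹ • y) ⁻¹' interior P) :=
    isOpen_interior.preimage (continuous_const_smul t⁻¹)
  refine interior_maximal ?_ hopen ?_
  · intro y hy
    have hy' : t⁻¹ • y ∈ P := interior_subset hy
    simpa [smul_smul, ht.ne'] using hP.combo_mem t 0 ht.le le_rfl _ _ hy' hy'
  · simpa [smul_smul, ht.ne'] using hc

theorem inducedDist_nonneg {E X : Type*} [NormedAddCommGroup E] (P : Set E) (D : X → X → E)
    (x y : X) : 0 ≤ inducedDist P D x y := by
  refine Real.sInf_nonneg ?_
  rintro r ⟨u, rfl, -⟩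
  exact norm_nonneg u

theorem inducedDist_le_norm {E X : Type*} [NormedAddCommGroup E] {P : Set E} {D : X → X → E}
    {x y : X} {u : E} (hu : coneLe P (D x y) u) : inducedDist P D x y ≤ ‖u‖ := by
  refine csInf_le ⟨0, ?_⟩ ⟨u, rfl, hu⟩
  rintro r ⟨v, rfl, -⟩
  exact norm_nonneg v

theorem stmt4 {E X : Type*} [NormedAddCommGroup E] [NormedSpace ℝ E] [CompleteSpace E]
    [Nonempty X] (P : Set E) (hP : IsCone E P) (hPint : (interior P).Nonempty)
    (D : X → X → E) (hD : IsConeMetric P D) (s : ℕ → X) (x : X)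
    (h : ∀ c : E, coneLt P 0 c → ∃ N : ℕ, ∀ n ≥ N, coneLt P (D (s n) x) c) :
    Tendsto (fun n => inducedDist P D (s n) x) atTop (𝓝 0) := by
  obtain ⟨c, hc⟩ := hPint
  rw [Metric.tendsto_atTop]
  intro ε hε
  -- `‖c‖ + 1` in place of `‖c‖` avoids dividing by zero.
  have hpos : 0 < ‖c‖ + 1 := by positivity
  have ht : 0 < ε / (‖c‖ + 1) := div_pos hε hpos
  obtain ⟨N, hN⟩ := h ((ε / (‖c‖ + 1)) • c) (by
    simpa [coneLt] using hP.smul_mem_interior ht hc)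
  refine ⟨N, fun n hn => ?_⟩
  have hle : inducedDist P D (s n) x ≤ ‖(ε / (‖c‖ + 1)) • c‖ :=
    inducedDist_le_norm (interior_subset (hN n hn))
  rw [norm_smul, Real.norm_of_nonneg ht.le] at hle
  rw [Real.dist_eq, sub_zero, abs_of_nonneg (inducedDist_nonneg P D (s n) x)]
  calc inducedDist P D (s n) x ≤ ε / (‖c‖ + 1) * ‖c‖ := hle
    _ < ε / (‖c‖ + 1) * (‖c‖ + 1) := by gcongr; linarith
    _ = ε := div_mul_cancel₀ ε hpos.ne'
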